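/- Let S be a finite archimedean commutative semigroup. Then E(S) ≤ D(S) + κ(S). -/

import Mathlib

namespace EGZ

variable {S : Type}

/-- `rep a n = (n+1)·a`, the (n+1)-fold sum of `a` with itself (defined for semigroups,
where the 0-fold sum is unavailable). -/
def rep [AddCommSemigroup S] (a : S) : ℕ → S
  | 0 => a
  | n + 1 => rep a n + a

/-- The sum of all terms of a sequence (= multiset) over the semigroup `S`, computed in
`WithZero S` (i.e. `S` with an extra identity element `0` adjoined); the empty sequence
has sum `0`, and a nonempty sequence has sum `↑s` where `s ∈ S` is its genuine sum. -/
def mSum [AddCommSemigroup S] (T : Multiset S) : WithZero S :=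
  (T.map (fun s => (s : WithZero S))).sum

/-- `σ(A) = σ(B)`, with the paper's convention: the empty sequence is regarded as having
sum equal to the identity element `e` of `S`, whenever `S` has an identity element. -/
def EqSum [AddCommSemigroup S] (A B : Multiset S) : Prop :=
  mSum A = mSum B ∨
    ∃ e : S, (∀ a : S, e + a = a) ∧
      ((mSum A = 0 ∧ mSum B = (e : WithZero S)) ∨
        (mSum A = (e : WithZero S) ∧ mSum B = 0))

/-- A sequence `T` over `S` is reducible if some proper subsequence `B` of `T`
satisfies `σ(B) = σ(T)`. -/
def Reducible [AddCommSemigroup S] (T : Multiset S) : Prop :=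
  ∃ B : Multiset S, B < T ∧ EqSum B T

/-- The (large) Davenport constant `D(S)`: the smallest `ℓ` such that every sequence over
`S` of length at least `ℓ` is reducible. -/
noncomputable def DavC (S : Type) [AddCommSemigroup S] : ℕ :=
  sInf {ℓ : ℕ | ∀ T : Multiset S, ℓ ≤ Multiset.card T → Reducible T}

/-- The property defining the small Davenport constant: `ℓ` is admissible if for every `m`
and every `c₁, …, c_m ∈ S` there is `J ⊆ [1, m]` with `|J| ≤ ℓ` and `Σ_{j=1}^m c_j = Σ_{j∈J} c_j`. -/
def SmallDavProp (S : Type) [AddCommSemigroup S] (ℓ : ℕ) : Prop :=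
  ∀ (m : ℕ) (c : Fin m → S), ∃ J : Finset (Fin m),
    J.card ≤ ℓ ∧ EqSum (J.val.map c) ((Finset.univ : Finset (Fin m)).val.map c)

/-- The small Davenport constant `d(S)`. -/
noncomputable def smallDavC (S : Type) [AddCommSemigroup S] : ℕ :=
  sInf {ℓ : ℕ | SmallDavProp S ℓ}

/-- The period of an element `a ∈ S`: the least `t > 0` such that `r·a = (r+t)·a`
for some `r > 0`. -/
noncomputable def period [AddCommSemigroup S] (a : S) : ℕ :=
  sInf {t : ℕ | 0 < t ∧ ∃ k : ℕ, rep a (k + t) = rep a k}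

/-- `exp(S)`: the least common multiple of the periods of all elements of `S`. -/
noncomputable def expS (S : Type) [AddCommSemigroup S] [Fintype S] : ℕ :=
  (Finset.univ : Finset S).lcm (fun a => period a)

/-- `κ(S) = ⌈|S| / exp(S)⌉ · exp(S)`. -/
noncomputable def kappa (S : Type) [AddCommSemigroup S] [Fintype S] : ℕ :=
  ((Fintype.card S + expS S - 1) / expS S) * expS S

/-- `E(S)`: the smallest positive integer `ℓ` such that every sequence `T` over `S` of
length at least `ℓ` contains a subsequence `T'` with `|T| - |T'| = κ(S)` and `σ(T') = σ(T)`. -/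
noncomputable def EC (S : Type) [AddCommSemigroup S] [Fintype S] : ℕ :=
  sInf {ℓ : ℕ | 0 < ℓ ∧ ∀ T : Multiset S, ℓ ≤ Multiset.card T →
    ∃ B : Multiset S, B ≤ T ∧ Multiset.card T - Multiset.card B = kappa S ∧ EqSum B T}

end EGZ

/-- A commutative semigroup `S` is archimedean: for any `a, b ∈ S` there exist
`m, n > 0` and `x, y ∈ S` with `m·a = b + x` and `n·b = a + y`
(here `EGZ.rep a m = (m+1)·a`, so `m` ranging over `ℕ` gives all positive multiples). -/
def IsArchimedean (S : Type) [AddCommSemigroup S] : Prop :=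
  ∀ a b : S, (∃ m : ℕ, ∃ x : S, EGZ.rep a m = b + x) ∧
    (∃ n : ℕ, ∃ y : S, EGZ.rep b n = a + y)

/-!
Let `G` be the universal group of `S`. Since `S` is finite, `G` is a quotient of `S`; hence `D(S)`
bounds the Davenport constant of `G`, `|G| ≤ κ(S)`, and `κ(S)` annihilates `G`. Gao's theorem
extracts from any `T` of length at least `D(S) + κ(S)` a subsequence `W` of length `κ(S)` whose sum
`w` is trivial in `G`, which means that `c + w = c` for some `c`. What remains after deleting `W`
still has length at least `D(S)`, so it is reducible and its sum `b` satisfies `b + d = b` for some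
`d`. By the archimedean property a multiple of `d` has the form `c + x`, so
`b + w = b + c + x + w = b + c + x = b`, and deleting `W` does not change the sum.

Gao's theorem rests on the fact that a sequence of length `|G|` whose multiplicities are at most
`h` has a nonempty zero-sum subsequence of length at most `h`. After a translation `0` is the most
frequent term, and its occurrences fill up a zero-sum subsequence whose length falls short of the
target by at most `h`.
-/

namespace EGZ

open Algebra Algebra.GrothendieckAddGroup
open scoped Pointwise Finset

section Scherk

variable {G : Type*} [DecidableEq G]

lemma neg_mem_of_vadd_subset [AddGroup G] {A : Finset G} {b : G} (h0 : 0 ∈ A)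
    (h : b +ᵥ A ⊆ A) : -b ∈ A := by
  have h_eq : b +ᵥ A = A := Finset.eq_of_subset_of_card_le h (Finset.card_vadd_finset b A).ge
  rw [← Finset.vadd_mem_vadd_finset_iff b, h_eq]
  simpa using h0

variable [AddCommGroup G]

lemma zero_mem_addDysonETransform {A B : Finset G} {a : G} (hA : 0 ∈ A) (hB : 0 ∈ B)
    (ha : a ∈ A) :
    0 ∈ (Finset.addDysonETransform a (A, B)).1 ∧ 0 ∈ (Finset.addDysonETransform a (A, B)).2 := by
  simp [Finset.mem_neg_vadd_finset_iff, hA, hB, ha]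

lemma uniqueAdd_addDysonETransform {A B : Finset G} {a : G} (ha : a ∈ A)
    (h : UniqueAdd A B 0 0) :
    UniqueAdd (Finset.addDysonETransform a (A, B)).1 (Finset.addDysonETransform a (A, B)).2
      0 0 := by
  intro x y hx hy hxy
  obtain ⟨hyB, hyA⟩ := Finset.mem_inter.1 hy
  rw [Finset.mem_neg_vadd_finset_iff, vadd_eq_add] at hyA
  rcases Finset.mem_union.1 hx with hxA | hxB
  · exact h hxA hyB hxy
  · obtain ⟨z, hzB, rfl⟩ := Finset.mem_vadd_finset.1 hxB
    rw [vadd_eq_add, add_right_comm] at hxy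
    obtain ⟨hay, rfl⟩ := h hyA hzB hxy
    obtain ⟨rfl, rfl⟩ := h ha hyB (by rw [hay, add_zero])
    simp

/-- **Kemperman–Scherk theorem**. -/
theorem card_add_card_le_card_add_add_one {A B : Finset G} (hA : 0 ∈ A) (hB : 0 ∈ B)
    (h : UniqueAdd A B 0 0) : #A + #B ≤ #(A + B) + 1 := by
  induction B using Finset.strongInduction generalizing A with
  | H B ih =>
    by_cases! hB_zero : ∀ b ∈ B, b = 0
    · obtain rfl : B = {0} := Finset.eq_singleton_iff_unique_mem.2 ⟨hB, hB_zero⟩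
      simp
    obtain ⟨b, hb, hb0⟩ := hB_zero
    obtain ⟨a, ha, hab⟩ : ∃ a ∈ A, b + a ∉ A := by
      by_contra! h_stable
      have h_neg : -b ∈ A := neg_mem_of_vadd_subset hA fun x hx ↦ by
        obtain ⟨a, ha, rfl⟩ := Finset.mem_vadd_finset.1 hx
        exact h_stable a ha
      exact hb0 (h h_neg hb (by simp)).2
    have h_ssubset : (Finset.addDysonETransform a (A, B)).2 ⊂ B := by
      refine (Finset.ssubset_iff_of_subset Finset.inter_subset_left).2 ⟨b, hb, ?_⟩
      simp [Finset.mem_neg_vadd_finset_iff, add_comm a b, hab]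
    obtain ⟨hA', hB'⟩ := zero_mem_addDysonETransform hA hB ha
    have h_ind := ih _ h_ssubset hA' hB' (uniqueAdd_addDysonETransform ha h)
    have h_card := Finset.addDysonETransform.card a (A, B)
    have h_sumset := Finset.card_le_card (Finset.addDysonETransform.subset a (A, B))
    dsimp only at h_card h_sumset
    omega

end Scherk

section DistinctTerms

variable {α : Type*} [DecidableEq α] {T U : Multiset α}

lemma cons_le_of_le_sub_dedup {a : α} (hU : U ≤ T - T.dedup) (ha : a ∈ T) : a ::ₘ U ≤ T := by
  rw [← Multiset.singleton_add, ← add_tsub_cancel_of_le (Multiset.dedup_le T)]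
  exact add_le_add (by simpa using ha) hU

lemma count_sub_dedup_le {h : ℕ} (hT : ∀ a, T.count a ≤ h + 1) (a : α) :
    (T - T.dedup).count a ≤ h := by
  have := hT a
  rw [Multiset.count_sub, Multiset.count_dedup]
  split_ifs with ha
  · omega
  · simp [Multiset.count_eq_zero.2 ha]

end DistinctTerms

section BoundedSubsums

variable {M : Type*} [AddCommMonoid M] [DecidableEq M] {h : ℕ} {T : Multiset M}

/-- The set of sums of the subsequences of `T` of length at most `h`, whose size is compared with
that of `T` to find short zero-sum subsequences. -/
def boundedSubsums (h : ℕ) (T : Multiset M) : Finset M :=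
  ((T.powerset.filter (Multiset.card · ≤ h)).map Multiset.sum).toFinset

lemma mem_boundedSubsums {a : M} :
    a ∈ boundedSubsums h T ↔ ∃ U ≤ T, Multiset.card U ≤ h ∧ U.sum = a := by
  simp [boundedSubsums, and_assoc]

variable (h T) in
lemma boundedSubsums_sub_dedup_add_subset :
    boundedSubsums h (T - T.dedup) + insert 0 T.toFinset ⊆ boundedSubsums (h + 1) T := by
  intro x hx
  obtain ⟨a, ha, b, hb, rfl⟩ := Finset.mem_add.1 hx
  obtain ⟨U, hU, hU_card, rfl⟩ := mem_boundedSubsums.1 ha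
  rw [Finset.mem_insert, Multiset.mem_toFinset] at hb
  rcases hb with rfl | hb
  · exact mem_boundedSubsums.2 ⟨U, hU.trans (Multiset.sub_le_self _ _), by omega, by simp⟩
  · exact mem_boundedSubsums.2
      ⟨b ::ₘ U, cons_le_of_le_sub_dedup hU hb, by simpa using hU_card, by simp [add_comm]⟩

lemma uniqueAdd_boundedSubsums_sub_dedup
    (hT : ∀ U ≤ T, Multiset.card U ≤ h + 1 → U.sum = 0 → U = 0) :
    UniqueAdd (boundedSubsums h (T - T.dedup)) (insert 0 T.toFinset) 0 0 := by
  intro a b ha hb hab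
  obtain ⟨U, hU, hU_card, rfl⟩ := mem_boundedSubsums.1 ha
  rw [Finset.mem_insert, Multiset.mem_toFinset] at hb
  rcases hb with rfl | hb
  · simpa using hab
  · have h_cons := hT (b ::ₘ U) (cons_le_of_le_sub_dedup hU hb) (by simpa using hU_card)
      (by simpa [add_comm] using hab)
    exact absurd h_cons (Multiset.cons_ne_zero)

end BoundedSubsums

section ShortZeroSum

variable {G : Type*} [AddCommGroup G] [DecidableEq G] {h : ℕ} {T : Multiset G}

-- Peel off the sets `T.dedup`, at most `h` times, applying the Kemperman–Scherk theorem to each.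
lemma card_lt_card_boundedSubsums (h_count : ∀ g, T.count g ≤ h)
    (hT : ∀ U ≤ T, Multiset.card U ≤ h → U.sum = 0 → U = 0) :
    Multiset.card T < #(boundedSubsums h T) := by
  induction h generalizing T with
  | zero =>
    obtain rfl : T = 0 := Multiset.ext.2 fun g ↦ by simpa using h_count g
    simp [boundedSubsums]
  | succ h ih =>
    have h_ind := ih (count_sub_dedup_le h_count) fun U hU hU_card ↦
      hT U (hU.trans (Multiset.sub_le_self _ _)) (by omega)
    have h_zero_notMem : (0 : G) ∉ T.toFinset := fun h0 ↦ by
      simpa using hT {0} (by simpa using h0) (by simp)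
    have h_scherk := card_add_card_le_card_add_add_one
      (mem_boundedSubsums.2 ⟨0, by simp⟩) (Finset.mem_insert_self _ _)
      (uniqueAdd_boundedSubsums_sub_dedup hT)
    have h_subset := Finset.card_le_card (boundedSubsums_sub_dedup_add_subset h T)
    rw [Finset.card_insert_of_notMem h_zero_notMem, Multiset.card_toFinset] at h_scherk
    rw [Multiset.card_sub (Multiset.dedup_le T)] at h_ind
    omega

lemma exists_short_sum_eq_zero [Fintype G] (h_count : ∀ g, T.count g ≤ h)
    (hT : Fintype.card G ≤ Multiset.card T) :
    ∃ U ≤ T, U ≠ 0 ∧ Multiset.card U ≤ h ∧ U.sum = 0 := by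
  by_contra! h_free
  have h_lt := card_lt_card_boundedSubsums h_count fun U hU hU_card hU_sum ↦
    of_not_not fun hU0 ↦ h_free U hU hU0 hU_card hU_sum
  exact (hT.trans_lt h_lt).not_ge (Finset.card_le_univ _)

end ShortZeroSum

section Gao

/-- `D` is an upper bound for the Davenport constant of the monoid `M` in its group-theoretic
form: every sequence of length at least `D` has a nonempty zero-sum subsequence. -/
def IsDavenportBound (M : Type*) [AddCommMonoid M] (D : ℕ) : Prop :=
  ∀ T : Multiset M, D ≤ Multiset.card T → ∃ U ≤ T, U ≠ 0 ∧ U.sum = 0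

lemma IsDavenportBound.exists_large_sum_eq_zero {M : Type*} [AddCommMonoid M] {D : ℕ}
    (hD : IsDavenportBound M D) (T : Multiset M) :
    ∃ W ≤ T, W.sum = 0 ∧ Multiset.card T < Multiset.card W + D := by
  induction T using Multiset.strongInductionOn with
  | ih T ih =>
    rcases lt_or_ge (Multiset.card T) D with hT | hT
    · exact ⟨0, by simp, by simp, by simpa using hT⟩
    obtain ⟨V, hV, hV0, hV_sum⟩ := hD T hT
    obtain ⟨X, rfl⟩ := Multiset.le_iff_exists_add.1 hV
    obtain ⟨W, hW, hW_sum, hW_card⟩ := ih X (lt_add_of_pos_left X (pos_iff_ne_zero.2 hV0))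
    refine ⟨V + W, add_le_add_right hW V, by simp [hV_sum, hW_sum], ?_⟩
    simp only [Multiset.card_add]
    omega

variable {G : Type*} [AddCommGroup G] [Fintype G] {D h k : ℕ}

lemma exists_sum_eq_zero_card_between [DecidableEq G] (hk : Fintype.card G ≤ k) {W : Multiset G}
    (h_count : ∀ g, W.count g ≤ h) (hW_sum : W.sum = 0) (hW_card : k ≤ Multiset.card W + h) :
    ∃ U ≤ W, U.sum = 0 ∧ Multiset.card U ≤ k ∧ k ≤ Multiset.card U + h := by
  induction W using Multiset.strongInductionOn with
  | ih W ih =>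
    rcases le_or_gt (Multiset.card W) k with hWk | hWk
    · exact ⟨W, le_rfl, hW_sum, hWk, hW_card⟩
    obtain ⟨V, hV, hV0, hV_card, hV_sum⟩ := exists_short_sum_eq_zero h_count (hk.trans hWk.le)
    obtain ⟨X, rfl⟩ := Multiset.le_iff_exists_add.1 hV
    have hX_count (g : G) : X.count g ≤ h :=
      (Multiset.count_le_of_le g (Multiset.le_add_left X V)).trans (h_count g)
    rw [Multiset.card_add] at hWk
    obtain ⟨U, hU, hU_spec⟩ := ih X (lt_add_of_pos_left X (pos_iff_ne_zero.2 hV0)) hX_count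
      (by simpa [hV_sum] using hW_sum) (by omega)
    exact ⟨U, hU.trans (Multiset.le_add_left X V), hU_spec⟩

-- The zeros of `T` pad a zero-sum subsequence of length just below `k` to length exactly `k`.
lemma exists_mem_powersetCard_sum_eq_zero_of_count_le [DecidableEq G]
    (hD : IsDavenportBound G D) (hk : Fintype.card G ≤ k) {T : Multiset G}
    (h_count : ∀ g, T.count g ≤ T.count 0) (hT : D + k ≤ Multiset.card T + 1) :
    ∃ W ∈ T.powersetCard k, W.sum = 0 := by
  set h := T.count 0 with hh
  have h_split : Multiset.replicate h 0 + T.filter (· ≠ 0) = T := by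
    rw [hh, ← Multiset.filter_eq' T 0, Multiset.filter_add_not]
  have h_split_card := congrArg Multiset.card h_split
  rw [Multiset.card_add, Multiset.card_replicate] at h_split_card
  obtain ⟨W, hW, hW_sum, hW_card⟩ := hD.exists_large_sum_eq_zero (T.filter (· ≠ 0))
  have hW_count (g : G) : W.count g ≤ h :=
    (Multiset.count_le_of_le g (hW.trans (Multiset.filter_le _ T))).trans (h_count g)
  obtain ⟨U, hU, hU_sum, hU_card, hkU⟩ :=
    exists_sum_eq_zero_card_between hk hW_count hW_sum (by omega)
  refine ⟨Multiset.replicate (k - Multiset.card U) 0 + U, Multiset.mem_powersetCard.2 ⟨?_, ?_⟩, ?_⟩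
  · rw [← h_split]
    exact add_le_add ((Multiset.replicate_le_replicate 0).2 (by omega)) (hU.trans hW)
  · simp [hU_card]
  · simp [hU_sum]

/-- **Gao's theorem**, classically stated for `k = |G|`. -/
theorem exists_mem_powersetCard_sum_eq_zero (hD : IsDavenportBound G D)
    (hk : Fintype.card G ≤ k) (hk_exp : ∀ g : G, k • g = 0) {T : Multiset G}
    (hT : D + k ≤ Multiset.card T + 1) : ∃ W ∈ T.powersetCard k, W.sum = 0 := by
  classical
  obtain ⟨g, -, hg⟩ := Finset.exists_max_image Finset.univ T.count Finset.univ_nonempty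
  have h_count (x : G) : (T.map (· - g)).count x = T.count (x + g) := by
    simpa using Multiset.count_map_eq_count' (· - g) T sub_left_injective (x + g)
  obtain ⟨W', hW', hW'_sum⟩ := exists_mem_powersetCard_sum_eq_zero_of_count_le hD hk
    (T := T.map (· - g)) (fun x ↦ by simpa [h_count] using hg _ (Finset.mem_univ _))
    (by simpa using hT)
  rw [Multiset.powersetCard_map, Multiset.mem_map] at hW'
  obtain ⟨W, hW, rfl⟩ := hW'
  refine ⟨W, hW, ?_⟩
  simpa [Multiset.sum_map_sub, (Multiset.mem_powersetCard.1 hW).2, hk_exp] using hW'_sum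

end Gao

section Semigroup

variable {S : Type} [AddCommSemigroup S]

lemma mSum_eq_sum_map_coe (A : Multiset S) :
    mSum A = (A.map (WithZero.coe : S → WithZero S)).sum := by
  simp [mSum]

lemma mSum_add (A B : Multiset S) : mSum (A + B) = mSum A + mSum B := by
  simp [mSum]

lemma exists_coe_eq_add_coe (x : WithZero S) (s : S) : ∃ t : S, (t : WithZero S) = x + s := by
  cases x with
  | zero => exact ⟨s, (zero_add _).symm⟩
  | coe r => exact ⟨r + s, WithZero.coe_add r s⟩

lemma exists_coe_eq_mSum {A : Multiset S} (hA : A ≠ 0) : ∃ s : S, (s : WithZero S) = mSum A := by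
  obtain ⟨a, ha⟩ := Multiset.exists_mem_of_ne_zero hA
  obtain ⟨A', rfl⟩ := Multiset.exists_cons_of_mem ha
  simpa [mSum_eq_sum_map_coe, add_comm] using exists_coe_eq_add_coe (mSum A') a

lemma coe_rep (a : S) (n : ℕ) :
    ((rep a n : S) : WithZero S) = (n + 1) • (a : WithZero S) := by
  induction n with
  | zero => simp [rep]
  | succ n ih => rw [rep, WithZero.coe_add, ih, succ_nsmul _ (n + 1)]

section Davenport

lemma reducible_add {A B : Multiset S} (hB : B ≠ 0) (h : mSum A = mSum (A + B))
    (C : Multiset S) : Reducible (A + B + C) :=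
  ⟨A + C, add_lt_add_left (lt_add_of_pos_right A (pos_iff_ne_zero.2 hB)) C,
    Or.inl (by rw [mSum_add, h, mSum_add (A + B)])⟩

-- Pigeonhole on the sums of the initial segments of `T`.
lemma reducible_of_card_lt [Fintype S] {T : Multiset S} (hT : Fintype.card S < Multiset.card T) :
    Reducible T := by
  let _ : Fintype (WithZero S) := inferInstanceAs (Fintype (Option S))
  obtain ⟨l, rfl⟩ := Quot.exists_rep T
  change Fintype.card S < l.length at hT
  obtain ⟨i, j, hij, h_eq⟩ := Fintype.exists_ne_map_eq_of_card_lt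
    (fun i : Fin (l.length + 1) ↦ mSum (l.take i : Multiset S))
    (by rw [Fintype.card_fin]; exact (Fintype.card_option (α := S)).trans_lt (Nat.succ_lt_succ hT))
  wlog hlt : i < j generalizing i j
  · exact this j i hij.symm h_eq.symm (hij.symm.lt_of_le (not_lt.1 hlt))
  obtain ⟨n, hn⟩ := Nat.exists_eq_add_of_lt hlt
  rw [hn, add_assoc, List.take_add, ← Multiset.coe_add] at h_eq
  have h_middle : (((l.drop i).take (n + 1) : List S) : Multiset S) ≠ 0 := by
    rw [← Multiset.card_pos, Multiset.coe_card, List.length_take, List.length_drop]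
    omega
  have h_red := reducible_add h_middle h_eq (l.drop (i + (n + 1)) : Multiset S)
  rwa [Multiset.coe_add, Multiset.coe_add, ← List.take_add, List.take_append_drop] at h_red

variable [Finite S]

lemma reducible_of_davC_le {T : Multiset S} (hT : DavC S ≤ Multiset.card T) : Reducible T := by
  cases nonempty_fintype S
  exact Nat.sInf_mem (s := {ℓ : ℕ | ∀ T : Multiset S, ℓ ≤ Multiset.card T → Reducible T})
    ⟨Fintype.card S + 1, fun _ ↦ reducible_of_card_lt⟩ T hT

variable (S) in
lemma davC_pos : 0 < DavC S := by
  by_contra! h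
  obtain ⟨B, hB, -⟩ := reducible_of_davC_le (S := S) (T := 0) h
  exact not_lt_zero hB

end Davenport

section Exponent

lemma period_spec [Finite S] (a : S) :
    0 < period a ∧ ∃ k : ℕ, rep a (k + period a) = rep a k := by
  refine Nat.sInf_mem (s := {t : ℕ | 0 < t ∧ ∃ k : ℕ, rep a (k + t) = rep a k}) ?_
  obtain ⟨i, j, hij, h⟩ := Finite.exists_ne_map_eq_of_infinite (rep a)
  wlog hlt : i < j generalizing i j
  · exact this j i hij.symm h.symm (by omega)
  exact ⟨j - i, by omega, i, by rw [Nat.add_sub_cancel' hlt.le, h]⟩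

variable [Fintype S]

lemma period_dvd_kappa (a : S) : period a ∣ kappa S :=
  (Finset.dvd_lcm (Finset.mem_univ a)).mul_left _

variable (S) in
lemma expS_pos : 0 < expS S :=
  Nat.pos_of_ne_zero fun h ↦ by
    obtain ⟨a, -, ha⟩ := Finset.lcm_eq_zero_iff.1 h
    exact (period_spec a).1.ne' ha

variable (S) in
lemma card_le_kappa : Fintype.card S ≤ kappa S := by
  have h := le_smul_ceilDiv (b := Fintype.card S) (expS_pos S)
  rwa [Nat.ceilDiv_eq_add_pred_div, smul_eq_mul, mul_comm] at h

end Exponent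

section GroupCompletion

/-- The universal group of the semigroup `S`, built as the Grothendieck group of the monoid
`WithZero S` in which `mSum` takes its values. -/
abbrev GroupCompletion (S : Type) [AddCommSemigroup S] : Type :=
  GrothendieckAddGroup (WithZero S)

lemma of_eq_of_iff {M : Type*} [AddCommMonoid M] {x y : M} :
    of x = of y ↔ ∃ c, c + x = c + y := by
  simpa using (AddLocalization.addMonoidOf (⊤ : AddSubmonoid M)).eq_iff_exists (x := x) (y := y)

lemma of_mSum (A : Multiset S) :
    of (mSum A) = (A.map fun s : S ↦ of (s : WithZero S)).sum := by
  rw [mSum_eq_sum_map_coe, map_multiset_sum, Multiset.map_map]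
  rfl

lemma of_coe_eq_zero {e : S} (he : e + e = e) : of (e : WithZero S) = 0 := by
  rw [← add_eq_left (a := of (e : WithZero S)), ← map_add, ← WithZero.coe_add, he]

lemma EqSum.of_mSum_eq {A B : Multiset S} (h : EqSum A B) : of (mSum A) = of (mSum B) := by
  rcases h with h | ⟨e, he, ⟨hA, hB⟩ | ⟨hA, hB⟩⟩
  · rw [h]
  · rw [hA, hB, of_coe_eq_zero (he e), map_zero]
  · rw [hA, hB, of_coe_eq_zero (he e), map_zero]

lemma kappa_nsmul_of_coe [Fintype S] (s : S) : kappa S • of (s : WithZero S) = 0 := by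
  obtain ⟨-, k, hk⟩ := period_spec s
  have h_period : period s • of (s : WithZero S) = 0 := by
    have h := congrArg (fun t : S ↦ of (t : WithZero S)) hk
    simp only [coe_rep, map_nsmul] at h
    rwa [add_right_comm, add_nsmul, add_eq_left] at h
  obtain ⟨q, hq⟩ := period_dvd_kappa s
  rw [hq, mul_nsmul, h_period, nsmul_zero]

lemma kappa_nsmul_of [Fintype S] (x : WithZero S) : kappa S • of x = 0 := by
  cases x with
  | zero => rw [map_zero, nsmul_zero]
  | coe s => exact kappa_nsmul_of_coe s

-- In the torsion group `GroupCompletion S` subtraction of `of y` is addition of a multiple of it.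
variable (S) in
lemma of_coe_surjective [Finite S] [Nonempty S] :
    Function.Surjective fun s : S ↦ (of (s : WithZero S) : GroupCompletion S) := by
  cases nonempty_fintype S
  intro g
  obtain ⟨⟨x, y⟩, hg⟩ := (AddLocalization.addMonoidOf (⊤ : AddSubmonoid (WithZero S))).surj g
  obtain ⟨s⟩ := ‹Nonempty S›
  obtain ⟨m, hm⟩ : ∃ m, kappa S = m + 1 :=
    Nat.exists_eq_add_one.2 (Fintype.card_pos.trans_le (card_le_kappa S))
  obtain ⟨t, ht⟩ := exists_coe_eq_add_coe (x + m • (y : WithZero S)) (rep s m)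
  have hs : of ((m + 1) • (s : WithZero S)) = 0 := by rw [map_nsmul, ← hm, kappa_nsmul_of]
  have hy : of (y : WithZero S) + m • of (y : WithZero S) = 0 := by
    rw [← succ_nsmul', ← hm, kappa_nsmul_of]
  refine ⟨t, ?_⟩
  change g + of (y : WithZero S) = of x at hg
  beta_reduce
  rw [ht, coe_rep, map_add, hs, map_add, map_nsmul, ← hg, add_zero, add_assoc, hy, add_zero]

variable (S) in
lemma isDavenportBound_davC [Finite S] [Nonempty S] :
    IsDavenportBound (GroupCompletion S) (DavC S) := by
  intro T hT
  obtain ⟨T, rfl⟩ := Multiset.map_surjective_of_surjective (of_coe_surjective S) T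
  obtain ⟨B, hB, hB_sum⟩ := reducible_of_davC_le (T := T) (by simpa using hT)
  obtain ⟨C, rfl⟩ := Multiset.le_iff_exists_add.1 hB.le
  refine ⟨C.map _, Multiset.map_le_map (Multiset.le_add_left C B), ?_, ?_⟩
  · simpa using (pos_of_lt_add_right hB).ne'
  · have hC : of (mSum B) = of (mSum B) + of (mSum C) := by
      rw [← map_add, ← mSum_add, hB_sum.of_mSum_eq]
    exact (of_mSum C).symm.trans (left_eq_add.1 hC)

theorem exists_mem_powersetCard_kappa_of_mSum_eq_zero [Fintype S] [Nonempty S] {T : Multiset S}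
    (hT : DavC S + kappa S ≤ Multiset.card T + 1) :
    ∃ W ∈ T.powersetCard (kappa S), of (mSum W) = 0 := by
  classical
  let _ : Fintype (GroupCompletion S) := Fintype.ofSurjective _ (of_coe_surjective S)
  have h_card : Fintype.card (GroupCompletion S) ≤ kappa S :=
    (Fintype.card_le_of_surjective _ (of_coe_surjective S)).trans (card_le_kappa S)
  have h_exp (g : GroupCompletion S) : kappa S • g = 0 := by
    obtain ⟨s, rfl⟩ := of_coe_surjective S g
    exact kappa_nsmul_of_coe s
  obtain ⟨W', hW', hW'_sum⟩ := exists_mem_powersetCard_sum_eq_zero (isDavenportBound_davC S)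
    h_card h_exp (T := T.map fun s : S ↦ of (s : WithZero S)) (by simpa using hT)
  rw [Multiset.powersetCard_map, Multiset.mem_map] at hW'
  obtain ⟨W, hW, rfl⟩ := hW'
  exact ⟨W, hW, (of_mSum W).trans hW'_sum⟩

end GroupCompletion

section Archimedean

lemma Reducible.exists_add_eq_left {T : Multiset S} (hT : Reducible T) :
    ∃ b d : S, mSum T = b ∧ b + d = b := by
  obtain ⟨B, hB, h_sum⟩ := hT
  obtain ⟨b, hb⟩ := exists_coe_eq_mSum (pos_of_gt hB).ne'
  rcases h_sum with h | ⟨e, he, ⟨-, h⟩ | ⟨-, h⟩⟩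
  · obtain ⟨C, rfl⟩ := Multiset.le_iff_exists_add.1 hB.le
    obtain ⟨d, hd⟩ := exists_coe_eq_mSum (pos_of_lt_add_right hB).ne'
    refine ⟨b, d, hb.symm, WithZero.coe_inj.1 ?_⟩
    rw [WithZero.coe_add, hb, hd, ← h, ← mSum_add, h]
  · exact ⟨e, e, h, he e⟩
  · exact absurd (hb.trans h) WithZero.coe_ne_zero

lemma add_rep_eq_left {b d : S} (h : b + d = b) (n : ℕ) : b + rep d n = b := by
  induction n with
  | zero => exact h
  | succ n ih => rw [rep, ← add_assoc, ih, h]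

-- Some multiple of `d` is a multiple of `c`, so `b` absorbs `c` up to a summand, hence also `w`.
lemma coe_add_eq_left_of_isArchimedean (harch : IsArchimedean S) {b d : S} (hbd : b + d = b)
    {c w : WithZero S} (hcw : c + w = c) : b + w = b := by
  obtain ⟨s, hs⟩ := exists_coe_eq_add_coe c b
  obtain ⟨⟨n, x, hx⟩, -⟩ := harch d s
  have hb : (b : WithZero S) = b + (c + b + x) := by
    rw [← hs, ← WithZero.coe_add, ← WithZero.coe_add, ← hx, add_rep_eq_left hbd]
  calc (b : WithZero S) + w
      = b + (c + b + x) + w := congrArg (· + w) hb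
    _ = b + (c + w + b + x) := by ac_rfl
    _ = b := by rw [hcw, ← hb]

lemma mSum_add_eq_right_of_isArchimedean (harch : IsArchimedean S) {W B : Multiset S}
    (hW : of (mSum W) = 0) (hB : Reducible B) : mSum (W + B) = mSum B := by
  obtain ⟨b, d, hb, hbd⟩ := hB.exists_add_eq_left
  obtain ⟨c, hc⟩ := of_eq_of_iff.1 (hW.trans (map_zero of).symm)
  rw [mSum_add, hb, add_comm,
    coe_add_eq_left_of_isArchimedean harch hbd (hc.trans (add_zero c))]

end Archimedean

end Semigroup

end EGZ

/-- For a finite archimedean commutative semigroup `S`,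
`E(S) ≤ D(S) + κ(S)`. -/
theorem E_le_of_archimedean (S : Type) [AddCommSemigroup S] [Fintype S]
    (harch : IsArchimedean S) :
    EGZ.EC S ≤ EGZ.DavC S + EGZ.kappa S := by
  have h_pos := EGZ.davC_pos S
  refine Nat.sInf_le ⟨by omega, fun T hT ↦ ?_⟩
  obtain ⟨a, -⟩ := Multiset.card_pos_iff_exists_mem.1 (by omega : 0 < Multiset.card T)
  have : Nonempty S := ⟨a⟩
  obtain ⟨W, hW, hW_zero⟩ := EGZ.exists_mem_powersetCard_kappa_of_mSum_eq_zero (T := T) (by omega)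
  obtain ⟨hWT, hW_card⟩ := Multiset.mem_powersetCard.1 hW
  obtain ⟨B, rfl⟩ := Multiset.le_iff_exists_add.1 hWT
  rw [Multiset.card_add] at hT ⊢
  have hB : EGZ.Reducible B := EGZ.reducible_of_davC_le (by omega)
  exact ⟨B, Multiset.le_add_left B W, by omega,
    Or.inl (EGZ.mSum_add_eq_right_of_isArchimedean harch hW_zero hB).symm⟩
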